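/- (Total efficiency) The Asymmetric Data Shapley values sum to the total utility gain of the full training set: Σ_{z ∈ D} φ^σ(z; v, D) = v(D) − v(∅). -/

import Mathlib

open Finset

variable {α : Type*}

/-- Prefix union `U_t = D₁ ∪ ⋯ ∪ D_t` (groups are 0-indexed, so this is the union of
the groups with index `< t`). -/
def prefixUnion [DecidableEq α] (Dg : ℕ → Finset α) (t : ℕ) : Finset α :=
  (Finset.range t).biUnion Dg

/-- Asymmetric Data Shapley value (subset form) of a source `z` belonging to group `Dg t`. -/
noncomputable def ADS [DecidableEq α] (Dg : ℕ → Finset α) (v : Finset α → ℝ) (t : ℕ)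
    (z : α) : ℝ :=
  (1 / (Dg t).card) *
    ∑ S ∈ ((Dg t).erase z).powerset,
      ((((Dg t).card - 1).choose S.card : ℝ))⁻¹ *
        (v (prefixUnion Dg t ∪ S ∪ {z}) - v (prefixUnion Dg t ∪ S))

/-!
Fix a game `v` on `n` players and let `a k` be the average of `v S` over all coalitions `S` of size
`k`. Choosing first a player `z` and then `k` of the others, both uniformly, yields a uniform
coalition `S` of size `k`, and `insert z S` is a uniform coalition of size `k + 1`. The Shapley
value of `z` is the mean over `k < n` of the average marginal contribution of `z` to such `S`, so
the values of all players sum to `∑ k < n, (a (k + 1) - a k) = a n - a 0`. The ADS values of group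
`t` are the Shapley values of the game `S ↦ v (U ∪ S)`, where `U` is the union of the earlier
groups, so they sum to the utility gained by adding that group, and these gains telescope in turn.
-/

open scoped BigOperators

section Expect

lemma expect_expect_bipartiteAbove {β M : Type*} [AddCommMonoid M] [Module ℚ≥0 M]
    (r : α → β → Prop) [∀ a b, Decidable (r a b)] {s : Finset α} {t : Finset β} {m n : ℕ}
    (hm : ∀ a ∈ s, #(t.bipartiteAbove r a) = m) (hn : ∀ b ∈ t, #(s.bipartiteBelow r b) = n)
    (hn₀ : n ≠ 0) (f : β → M) :
    𝔼 a ∈ s, 𝔼 b ∈ t.bipartiteAbove r a, f b = 𝔼 b ∈ t, f b := by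
  have hcard : (#s * m : ℚ≥0) = #t * n := mod_cast card_mul_eq_card_mul r hm hn
  have hn' : (n : ℚ≥0) ≠ 0 := mod_cast hn₀
  calc
    𝔼 a ∈ s, 𝔼 b ∈ t.bipartiteAbove r a, f b
    _ = (#s : ℚ≥0)⁻¹ • ∑ a ∈ s, (m : ℚ≥0)⁻¹ • ∑ b ∈ t.bipartiteAbove r a, f b := by
      rw [expect]
      exact congrArg _ (sum_congr rfl fun a ha ↦ by rw [expect, hm a ha])
    _ = (#s * m : ℚ≥0)⁻¹ • ∑ a ∈ s, ∑ b ∈ t.bipartiteAbove r a, f b := by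
      rw [← smul_sum, smul_smul, mul_inv]
    _ = (#t * n : ℚ≥0)⁻¹ • ∑ b ∈ t, ∑ _a ∈ s.bipartiteBelow r b, f b := by
      rw [hcard, sum_sum_bipartiteAbove_eq_sum_sum_bipartiteBelow r fun _ b ↦ f b]
    _ = (#t * n : ℚ≥0)⁻¹ • ∑ b ∈ t, (n : ℚ≥0) • f b := by
      congr 1
      exact sum_congr rfl fun b hb ↦ by rw [sum_const, hn b hb, Nat.cast_smul_eq_nsmul]
    _ = 𝔼 b ∈ t, f b := by
      rw [← smul_sum, smul_smul, mul_inv, inv_mul_cancel_right₀ hn', expect]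

variable [DecidableEq α] {M : Type*} [AddCommMonoid M] [Module ℚ≥0 M]

lemma expect_expect_powersetCard_erase {A : Finset α} {k : ℕ} (hk : k < #A) (f : Finset α → M) :
    𝔼 z ∈ A, 𝔼 S ∈ (A.erase z).powersetCard k, f S = 𝔼 S ∈ A.powersetCard k, f S := by
  have above (z : α) :
      (A.powersetCard k).bipartiteAbove (· ∉ ·) z = (A.erase z).powersetCard k := by
    ext S
    simp only [mem_bipartiteAbove, mem_powersetCard, subset_erase]
    tauto
  have card_above : ∀ z ∈ A,
      #((A.powersetCard k).bipartiteAbove (· ∉ ·) z) = (#A - 1).choose k := fun z hz ↦ by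
    rw [above, card_powersetCard, card_erase_of_mem hz]
  have card_below : ∀ S ∈ A.powersetCard k, #(A.bipartiteBelow (· ∉ ·) S) = #A - k :=
    fun S hS ↦ by
      obtain ⟨hSA, rfl⟩ := mem_powersetCard.1 hS
      rw [bipartiteBelow, ← sdiff_eq_filter, card_sdiff_of_subset hSA]
  simpa only [above] using
    expect_expect_bipartiteAbove (· ∉ ·) card_above card_below (Nat.sub_ne_zero_of_lt hk) f

lemma expect_expect_powersetCard_insert (A : Finset α) (k : ℕ) (f : Finset α → M) :
    𝔼 z ∈ A, 𝔼 S ∈ (A.erase z).powersetCard k, f (insert z S) =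
      𝔼 S ∈ A.powersetCard (k + 1), f S := by
  have above : ∀ z ∈ A, (A.powersetCard (k + 1)).bipartiteAbove (· ∈ ·) z =
      ((A.erase z).powersetCard k).image (insert z) := fun z hz ↦ by
    simpa [bipartiteAbove, sdiff_singleton_eq_erase, union_singleton, Function.comp_def] using
      filter_powersetCard_subset {z} A (k + 1) (singleton_subset_iff.2 hz) (by simp)
  have insert_injOn (z : α) :
      Set.InjOn (insert z) ((A.erase z).powersetCard k : Set (Finset α)) :=
    insert_erase_invOn.2.injOn.mono fun S hS ↦
      notMem_mono (mem_powersetCard.1 hS).1 (notMem_erase z A)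
  have card_above : ∀ z ∈ A,
      #((A.powersetCard (k + 1)).bipartiteAbove (· ∈ ·) z) = (#A - 1).choose k := fun z hz ↦ by
    rw [above z hz, card_image_of_injOn (insert_injOn z), card_powersetCard, card_erase_of_mem hz]
  have card_below : ∀ S ∈ A.powersetCard (k + 1), #(A.bipartiteBelow (· ∈ ·) S) = k + 1 :=
    fun S hS ↦ by
      obtain ⟨hSA, hcard⟩ := mem_powersetCard.1 hS
      rw [bipartiteBelow, filter_mem_eq_inter, inter_eq_right.2 hSA, hcard]
  rw [← expect_expect_bipartiteAbove (· ∈ ·) card_above card_below k.succ_ne_zero f]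
  exact expect_congr rfl fun z hz ↦ by rw [above z hz, expect_image (insert_injOn z)]

end Expect

section Shapley

variable [DecidableEq α] {M : Type*} [AddCommGroup M] [Module ℚ≥0 M]

/-- Shapley value of the player `z` in the game `v` on the set of players `A`, in its
size-stratified form: the expected marginal contribution of `z` to a coalition of other players
whose size is uniform in `{0, …, #A - 1}` and which is uniform among those of that size. -/
def shapleyValue (A : Finset α) (v : Finset α → M) (z : α) : M :=
  𝔼 k ∈ range #A, 𝔼 S ∈ (A.erase z).powersetCard k, (v (insert z S) - v S)

lemma shapleyValue_eq_sum_powerset {A : Finset α} {z : α} (hz : z ∈ A) (v : Finset α → M) :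
    shapleyValue A v z = (#A : ℚ≥0)⁻¹ • ∑ S ∈ (A.erase z).powerset,
      ((#A - 1).choose #S : ℚ≥0)⁻¹ • (v (insert z S) - v S) := by
  rw [shapleyValue, expect, card_range, sum_powerset, card_erase_add_one hz]
  congr 1
  refine sum_congr rfl fun k _ ↦ ?_
  rw [expect, smul_sum, card_powersetCard, card_erase_of_mem hz]
  exact sum_congr rfl fun S hS ↦ by rw [(mem_powersetCard.1 hS).2]

theorem sum_shapleyValue (A : Finset α) (v : Finset α → M) :
    ∑ z ∈ A, shapleyValue A v z = v A - v ∅ := by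
  calc
    ∑ z ∈ A, shapleyValue A v z
    _ = #A • 𝔼 k ∈ range #A, 𝔼 z ∈ A, 𝔼 S ∈ (A.erase z).powersetCard k,
          (v (insert z S) - v S) := by
      rw [← card_smul_expect, expect_comm]
      rfl
    _ = ∑ k ∈ range #A, 𝔼 z ∈ A, 𝔼 S ∈ (A.erase z).powersetCard k,
          (v (insert z S) - v S) := by
      simpa only [card_range] using card_smul_expect (range #A) _
    _ = ∑ k ∈ range #A,
          (𝔼 S ∈ A.powersetCard (k + 1), v S - 𝔼 S ∈ A.powersetCard k, v S) := by
      refine sum_congr rfl fun k hk ↦ ?_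
      simp only [expect_sub_distrib]
      rw [expect_expect_powersetCard_insert, expect_expect_powersetCard_erase (mem_range.1 hk)]
    _ = v A - v ∅ := by
      rw [sum_range_sub fun k ↦ 𝔼 S ∈ A.powersetCard k, v S]
      simp only [powersetCard_self, powersetCard_zero, expect_singleton]

end Shapley

section ADS

variable [DecidableEq α] (Dg : ℕ → Finset α) (v : Finset α → ℝ)

lemma prefixUnion_succ (t : ℕ) : prefixUnion Dg (t + 1) = prefixUnion Dg t ∪ Dg t := by
  rw [prefixUnion, range_add_one, biUnion_insert, union_comm, prefixUnion]

lemma ADS_eq_shapleyValue {t : ℕ} {z : α} (hz : z ∈ Dg t) :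
    ADS Dg v t z = shapleyValue (Dg t) (fun S ↦ v (prefixUnion Dg t ∪ S)) z := by
  simp only [ADS, shapleyValue_eq_sum_powerset hz, NNRat.smul_def, NNRat.cast_inv,
    NNRat.cast_natCast, one_div, union_singleton, union_insert]

lemma sum_ADS (t : ℕ) :
    ∑ z ∈ Dg t, ADS Dg v t z = v (prefixUnion Dg (t + 1)) - v (prefixUnion Dg t) := by
  rw [sum_congr rfl fun z ↦ ADS_eq_shapleyValue Dg v, sum_shapleyValue, union_empty,
    prefixUnion_succ]

end ADS

theorem ads_total_efficiency_general [DecidableEq α] (T : ℕ) (Dg : ℕ → Finset α)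
    (v : Finset α → ℝ) :
    ∑ t ∈ range T, ∑ z ∈ Dg t, ADS Dg v t z = v ((range T).biUnion Dg) - v ∅ :=
  calc
    ∑ t ∈ range T, ∑ z ∈ Dg t, ADS Dg v t z
    _ = ∑ t ∈ range T, (v (prefixUnion Dg (t + 1)) - v (prefixUnion Dg t)) :=
      sum_congr rfl fun t _ ↦ sum_ADS Dg v t
    _ = v (prefixUnion Dg T) - v (prefixUnion Dg 0) := sum_range_sub (v <| prefixUnion Dg ·) T
    _ = v ((range T).biUnion Dg) - v ∅ := rfl

/-- Total efficiency: the ADS values of all sources in the full training set `D`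
(each valued within its own group) sum to `v(D) − v(∅)`. -/
theorem ads_total_efficiency [DecidableEq α]
    (T : ℕ) (hT : 1 ≤ T) (Dg : ℕ → Finset α)
    (hdisj : ∀ i < T, ∀ j < T, i ≠ j → Disjoint (Dg i) (Dg j))
    (hne : ∀ j < T, (Dg j).Nonempty)
    (D : Finset α) (hD : D = (Finset.range T).biUnion Dg)
    (v : Finset α → ℝ) :
    ∑ t ∈ Finset.range T, ∑ z ∈ Dg t, ADS Dg v t z = v D - v ∅ := by
  rw [hD, ads_total_efficiency_general]
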